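/- Let z ∈ K = ℚ(α, β) satisfy z³ = α/β. Then for every integer m ≥ 2 there is no element y ∈ K with y^m = z, and there is no element y ∈ K with y^m = −z. -/

import Mathlib

/-!
Suppose `y ∈ K` and `y ^ m = ± z`. The element `w = y * conj y = |y|²` is the norm of `y` from
`K = ℚ(α)(β)` to `ℚ(α)`, and comparing absolute values in `(y ^ m) ^ 3 = ± α / β`, where
`|β|² = 1 / α`, gives `w ^ m = α`. So it suffices that `α` has no `m`-th root `w > 1` in `ℚ(α)`
for `m ≥ 2` (`no_root`).

Such a `w` is an algebraic unit with conjugates `w, v, conj v`, where `v ^ m = β` and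
`w * |v|² = 1`. Its trace `a` and the trace `b` of `w⁻¹` are integers (`exists_rat_trace`,
`exists_int_of_rat_of_isIntegral`), and `w` is a root of `X ^ 3 - a X ^ 2 + b X - 1`. Since
`1 < w` and `w ^ 2 ≤ w ^ m = α < 1.84`, size estimates leave only `a = 0`, `b = -1`
(`plastic_of_int`), so `w ^ 3 = w + 1`, that is `w = 1.3247…`. But then `w ^ 2 < 1.83 < α`
while `w ^ 3 > 1.84 > α`, so no power of `w` equals `α`.

Elements of `ℚ(α)` are handled as values `aeval α p` of rational polynomials; replacing `α` by
`β` or `conj β` in `aeval α p` is then the passage to conjugates, which is well behaved because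
`X ^ 3 - X ^ 2 - X - 1` is irreducible (`aeval_eq_zero_of_conj`).
-/
open Polynomial ComplexConjugate

theorem tribonacci_irreducible : Irreducible (X ^ 3 - X ^ 2 - X - 1 : ℚ[X]) := by
  have hm : (X ^ 3 - X ^ 2 - X - 1 : ℚ[X]).Monic := by monicity!
  have hd : (X ^ 3 - X ^ 2 - X - 1 : ℚ[X]).natDegree = 3 := by compute_degree!
  rw [hm.irreducible_iff_roots_eq_zero_of_degree_le_three (by omega) (by omega)]
  rw [Multiset.eq_zero_iff_forall_notMem]
  intro r hr
  have hr0 : r ^ 3 - r ^ 2 - r - 1 = 0 := by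
    have := (mem_roots'.1 hr).2
    simpa [IsRoot] using this
  have hint : IsIntegral ℤ r := by
    refine ⟨X ^ 3 - X ^ 2 - X - 1, by monicity!, ?_⟩
    simpa using hr0
  obtain ⟨n, rfl⟩ := IsIntegrallyClosed.isIntegral_iff.1 hint
  have hn : n ^ 3 - n ^ 2 - n - 1 = 0 := by
    simp only [eq_intCast] at hr0
    exact_mod_cast hr0
  have h1 : n * (n ^ 2 - n - 1) = 1 := by linarith
  rcases Int.eq_one_or_neg_one_of_mul_eq_one h1 with h | h <;> subst h <;> norm_num at hn

/-- Both roots have the same minimal polynomial, so they satisfy the same rational relations. -/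
theorem aeval_eq_zero_of_conj {α β : ℂ} (hα : α ^ 3 = α ^ 2 + α + 1)
    (hβ : β ^ 3 = β ^ 2 + β + 1) (p : ℚ[X]) (hp : aeval α p = 0) : aeval β p = 0 := by
  have hmin : minpoly ℚ α = X ^ 3 - X ^ 2 - X - 1 := by
    refine (minpoly.eq_of_irreducible_of_monic tribonacci_irreducible ?_ (by monicity!)).symm
    simp only [map_sub, map_pow, aeval_X, map_one]
    linear_combination hα
  obtain ⟨q, rfl⟩ := minpoly.dvd ℚ α hp
  have h0 : aeval β (X ^ 3 - X ^ 2 - X - 1 : ℚ[X]) = 0 := by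
    simp only [map_sub, map_pow, aeval_X, map_one]
    linear_combination hβ
  rw [hmin, map_mul, h0, zero_mul]

theorem isIntegral_root {x : ℂ} (hx : x ^ 3 = x ^ 2 + x + 1) : IsIntegral ℤ x :=
  ⟨X ^ 3 - X ^ 2 - X - 1, by monicity!, by simp; linear_combination hx⟩

/-- `x⁻¹ = x ^ 2 - x - 1`. -/
theorem mul_sq_sub {x : ℂ} (hx : x ^ 3 = x ^ 2 + x + 1) : x * (x ^ 2 - x - 1) = 1 := by
  linear_combination hx

theorem vieta {α β γ : ℂ} (hα : α ^ 3 = α ^ 2 + α + 1) (hβ : β ^ 3 = β ^ 2 + β + 1)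
    (hγ : γ ^ 3 = γ ^ 2 + γ + 1) (hαβ : α ≠ β) (hαγ : α ≠ γ) (hβγ : β ≠ γ) :
    α + β + γ = 1 ∧ α * β * γ = 1 := by
  have h1 : α ^ 2 + α * β + β ^ 2 = α + β + 1 :=
    mul_left_cancel₀ (sub_ne_zero.2 hαβ) (by linear_combination hα - hβ)
  have h2 : α ^ 2 + α * γ + γ ^ 2 = α + γ + 1 :=
    mul_left_cancel₀ (sub_ne_zero.2 hαγ) (by linear_combination hα - hγ)
  have h3 : α + β + γ = 1 :=
    mul_left_cancel₀ (sub_ne_zero.2 hβγ) (by linear_combination h1 - h2)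
  refine ⟨h3, ?_⟩
  obtain rfl : γ = 1 - α - β := by linear_combination h3
  linear_combination hα - α * h1

/-- The trace of `aeval α p ∈ ℚ(α)` is rational: it is a rational combination of the power sums
of the roots, which satisfy the tribonacci recurrence. -/
theorem exists_rat_trace {α β γ : ℂ} (hα : α ^ 3 = α ^ 2 + α + 1)
    (hβ : β ^ 3 = β ^ 2 + β + 1) (hγ : γ ^ 3 = γ ^ 2 + γ + 1) (h1 : α + β + γ = 1)
    (h2 : α * β * γ = 1) (p : ℚ[X]) :
    ∃ r : ℚ, aeval α p + aeval β p + aeval γ p = r := by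
  have hpow : ∀ n : ℕ, ∃ r : ℚ, α ^ n + β ^ n + γ ^ n = r := by
    intro n
    induction n using Nat.strong_induction_on with
    | _ n ih =>
      match n, ih with
      | 0, _ => exact ⟨3, by norm_num⟩
      | 1, _ => exact ⟨1, by simpa using h1⟩
      | 2, _ =>
        refine ⟨3, ?_⟩
        have i1 := mul_sq_sub hα
        have i2 := mul_sq_sub hβ
        have i3 := mul_sq_sub hγ
        -- both sides are the sum of the inverses of the roots
        have e : α * β + β * γ + γ * α = (α ^ 2 - α - 1) + (β ^ 2 - β - 1) + (γ ^ 2 - γ - 1) := by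
          linear_combination (-(β * γ)) * i1 - (α * γ) * i2 - (α * β) * i3 +
            (α ^ 2 - α - 1 + (β ^ 2 - β - 1) + (γ ^ 2 - γ - 1)) * h2
        push_cast
        have key : 3 * (α ^ 2 + β ^ 2 + γ ^ 2) = 9 := by
          linear_combination (-2) * e + (α + β + γ + 1) * h1 + 2 * h1
        linear_combination key / 3
      | n + 3, ih =>
        obtain ⟨a, ha⟩ := ih n (by omega)
        obtain ⟨b, hb⟩ := ih (n + 1) (by omega)
        obtain ⟨c, hc⟩ := ih (n + 2) (by omega)
        refine ⟨a + b + c, ?_⟩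
        push_cast
        rw [← ha, ← hb, ← hc]
        linear_combination α ^ n * hα + β ^ n * hβ + γ ^ n * hγ
  induction p using Polynomial.induction_on' with
  | add p q hp hq =>
    obtain ⟨a, ha⟩ := hp
    obtain ⟨b, hb⟩ := hq
    refine ⟨a + b, ?_⟩
    simp only [map_add]
    push_cast
    linear_combination ha + hb
  | monomial n c =>
    obtain ⟨r, hr⟩ := hpow n
    refine ⟨c * r, ?_⟩
    simp only [aeval_monomial, eq_ratCast]
    push_cast
    linear_combination (c : ℂ) * hr

theorem exists_int_of_rat_of_isIntegral {x : ℂ} (hx : IsIntegral ℤ x) {r : ℚ} (hr : x = r) :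
    ∃ n : ℤ, x = n := by
  have h : IsIntegral ℤ r := by
    rw [← isIntegral_algebraMap_iff (algebraMap ℚ ℂ).injective]
    simpa [← hr] using hx
  obtain ⟨n, rfl⟩ := IsIntegrallyClosed.isIntegral_iff.1 h
  exact ⟨n, by simp [hr]⟩

/-- `K = ℚ[α] + ℚ[α] β`; the hypothesis `hq` is the quadratic equation of `β` over `ℚ(α)`, with
`1 / α` written as `α ^ 2 - α - 1`. -/
theorem exists_repr {α β : ℂ} (hα : α ^ 3 = α ^ 2 + α + 1) (hβ : β ^ 3 = β ^ 2 + β + 1)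
    (hq : β ^ 2 = (1 - α) * β - (α ^ 2 - α - 1)) {y : ℂ}
    (hy : y ∈ IntermediateField.adjoin ℚ ({α, β} : Set ℂ)) :
    ∃ p q : ℚ[X], y = aeval α p + aeval α q * β := by
  have halg : ∀ x ∈ ({α, β} : Set ℂ), IsAlgebraic ℚ x := by
    rintro x (rfl | rfl)
    · exact ((isIntegral_root hα).tower_top (A := ℚ)).isAlgebraic
    · exact ((isIntegral_root hβ).tower_top (A := ℚ)).isAlgebraic
  rw [← IntermediateField.mem_toSubalgebra,
    IntermediateField.adjoin_toSubalgebra_of_isAlgebraic halg] at hy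
  induction hy using Algebra.adjoin_induction with
  | mem x hx =>
    rcases hx with rfl | rfl
    · exact ⟨X, 0, by simp⟩
    · exact ⟨0, 1, by simp⟩
  | algebraMap r => exact ⟨C r, 0, by simp⟩
  | add x y _ _ hx hy =>
    obtain ⟨p, q, rfl⟩ := hx
    obtain ⟨p', q', rfl⟩ := hy
    exact ⟨p + p', q + q', by simp only [map_add]; ring⟩
  | mul x y _ _ hx hy =>
    obtain ⟨p, q, rfl⟩ := hx
    obtain ⟨p', q', rfl⟩ := hy
    refine ⟨p * p' - q * q' * (X ^ 2 - X - 1), p * q' + q * p' + q * q' * (1 - X), ?_⟩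
    simp only [map_add, map_sub, map_mul, map_pow, map_one, aeval_X]
    linear_combination (aeval α q * aeval α q') * hq

/-- A cubic unit `1 < w < √1.84` with conjugates `v, conj v` satisfying `w * |v|² = 1` is the
plastic number. Here `t` is the real part of `v`, and `a`, `b` are the traces of `w` and `w⁻¹`. -/
theorem plastic_of_int {w t : ℝ} (hw : 1 < w) (hw2 : w ^ 2 < 1.84) (ht : w * t ^ 2 ≤ 1)
    {a b : ℤ} (ha : w + 2 * t = a) (hb : 1 / w + 2 * t * w = b) : w ^ 3 = w + 1 := by
  have hw0 : 0 < w := by linarith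
  have hwu : w < 1.357 := by nlinarith
  have htl : -1 < t := by
    by_contra! h
    nlinarith [mul_le_mul_of_nonneg_left (show 1 ≤ t ^ 2 by nlinarith) hw0.le]
  have ha0 : 0 ≤ a := by
    have : (-1 : ℝ) < a := by linarith
    have : (-1 : ℤ) < a := by exact_mod_cast this
    omega
  -- AM-GM: `|t * w| ≤ √w < (w + 1) / 2`
  have htw : 2 * (t * w) < w + 1 := by
    by_contra! h
    nlinarith [mul_le_mul_of_nonneg_left ht hw0.le, sq_nonneg (w - 1),
      mul_pos (sub_pos.2 hw) (sub_pos.2 hw)]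
  -- `w ^ 3 - a w ^ 2 + b w - 1 = 0`
  have hf : (b : ℝ) * w = 1 + w ^ 2 * (a - w) := by
    rw [← hb, ← ha]; field_simp; ring
  -- the value at `1` of `X ^ 3 - a X ^ 2 + b X - 1` is `b - a`, negative since `w > 1` is
  -- its only real root
  have hba : b < a := by
    have : (b : ℝ) < a := by
      rw [← ha, ← hb]
      have : (w + 2 * t - (1 / w + 2 * t * w)) * w = (w - 1) * (w + 1 - 2 * (t * w)) := by
        field_simp; ring
      have h' := mul_pos (sub_pos.2 hw) (sub_pos.2 htw)
      rw [← this] at h'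
      have := pos_of_mul_pos_left h' hw0.le
      linarith
    exact_mod_cast this
  have hba1 : (b : ℝ) ≤ a - 1 := by exact_mod_cast Int.le_sub_one_of_lt hba
  have ha00 : (0 : ℝ) ≤ a := by exact_mod_cast ha0
  have ha1 : a < 1 := by
    by_contra! h
    have h : (1 : ℝ) ≤ a := by exact_mod_cast h
    nlinarith [mul_le_mul_of_nonneg_right hba1 hw0.le,
      mul_nonneg (sub_nonneg.2 h) (mul_pos hw0 (sub_pos.2 hw)).le]
  obtain rfl : a = 0 := by omega
  have hb1 : -2 < b := by
    by_contra! h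
    have h : (b : ℝ) ≤ -2 := by exact_mod_cast h
    push_cast at hf
    nlinarith
  obtain rfl : b = -1 := by omega
  push_cast at hf
  linarith

theorem conj_aeval (x : ℂ) (p : ℚ[X]) : conj (aeval x p) = aeval (conj x) p := by
  induction p using Polynomial.induction_on' with
  | add p q hp hq => simp [hp, hq]
  | monomial n c => simp [aeval_monomial]

/-- No `y ∈ K` satisfies `y ^ (3 * m) = ± α / β` with `m ≥ 2`. -/
theorem no_root {α β y : ℂ}
    (hαim : α.im = 0) (hα : α ^ 3 = α ^ 2 + α + 1)
    (hα1 : 1.83 < α.re) (hα2 : α.re < 1.84)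
    (hβ : β ^ 3 = β ^ 2 + β + 1) (hβim : β.im ≠ 0)
    (hy : y ∈ IntermediateField.adjoin ℚ ({α, β} : Set ℂ))
    {m : ℕ} (hm : 2 ≤ m) (hym : (y ^ m) ^ 3 = α / β ∨ (y ^ m) ^ 3 = -(α / β)) : False := by
  have hαr : α = (α.re : ℂ) := by apply Complex.ext <;> simp [hαim]
  have hγ : (conj β) ^ 3 = (conj β) ^ 2 + conj β + 1 := by
    simpa using congrArg conj hβ
  have hαβ : α ≠ β := fun h => hβim (h ▸ hαim)
  have hαγ : α ≠ conj β := fun h => hβim (by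
    have := congrArg Complex.im h
    rw [Complex.conj_im, hαim] at this
    linarith)
  have hβγ : β ≠ conj β := fun h => hβim (Complex.conj_eq_iff_im.1 h.symm)
  obtain ⟨hsum, hprod⟩ := vieta hα hβ hγ hαβ hαγ hβγ
  have hq : β ^ 2 = (1 - α) * β - (α ^ 2 - α - 1) := by
    have h : α * (β * conj β - (α ^ 2 - α - 1)) = 0 := by linear_combination hprod - hα
    have hα0 : α ≠ 0 := by rintro rfl; norm_num at hα1
    have h := (mul_eq_zero.1 h).resolve_left hα0
    linear_combination β * hsum - h
  have hnβ : α.re * Complex.normSq β = 1 := by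
    have h : ((α.re * Complex.normSq β : ℝ) : ℂ) = 1 := by
      rw [Complex.ofReal_mul, ← hαr, ← Complex.mul_conj]; linear_combination hprod
    exact_mod_cast h
  have hA0 : 0 < α.re := by linarith
  -- `w = |y|²` is the relative norm of `y` over `ℚ(α)`, and an `m`-th root of `α`
  set w : ℝ := Complex.normSq y with hw
  have hw0 : 0 ≤ w := Complex.normSq_nonneg y
  have hwm : w ^ m = α.re := by
    have h3 : (w ^ m) ^ 3 = Complex.normSq (α / β) := by
      rcases hym with h | h <;> simpa [hw] using congrArg Complex.normSq h
    have hnα : Complex.normSq α = α.re ^ 2 := by simp [Complex.normSq_apply, hαim, sq]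
    have hb0 : Complex.normSq β ≠ 0 := fun h => by simp [h] at hnβ
    have h4 : Complex.normSq (α / β) = α.re ^ 3 := by
      rw [map_div₀, hnα, div_eq_iff hb0]; linear_combination (-α.re ^ 2) * hnβ
    exact (pow_left_inj₀ (by positivity) hA0.le three_ne_zero).1 (h3.trans h4)
  obtain ⟨p, hp⟩ : ∃ p : ℚ[X], (w : ℂ) = aeval α p := by
    obtain ⟨p, q, hpq⟩ := exists_repr hα hβ hq hy
    have hreal : ∀ r : ℚ[X], conj (aeval α r) = aeval α r := fun r => by
      rw [conj_aeval, Complex.conj_eq_iff_im.2 hαim]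
    refine ⟨p ^ 2 + p * q * (1 - X) + q ^ 2 * (X ^ 2 - X - 1), ?_⟩
    rw [hw, ← Complex.mul_conj, hpq]
    simp only [map_add, map_sub, map_mul, map_pow, map_one, aeval_X, hreal]
    have hc : conj β = 1 - α - β := by linear_combination hsum
    rw [hc]
    linear_combination (-(aeval α q) ^ 2) * hq
  -- the other conjugates of `w` are `v` and `conj v`
  set v : ℂ := aeval β p with hv
  have hwmC : (w : ℂ) ^ m = α := by rw [hαr, ← hwm]; push_cast; rfl
  have hvm : v ^ m = β := by
    have := aeval_eq_zero_of_conj hα hβ (p ^ m - X) (by simp [← hp, hwmC])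
    simpa [sub_eq_zero] using this
  have hvc : aeval (conj β) p = conj v := (conj_aeval β p).symm
  have hwv : w * Complex.normSq v = 1 := by
    have h : (w * Complex.normSq v) ^ m = 1 ^ m := by
      rw [mul_pow, hwm, ← map_pow, hvm, hnβ, one_pow]
    exact (pow_left_inj₀ (mul_nonneg hw0 (Complex.normSq_nonneg v)) zero_le_one (by omega)).1 h
  have hwvC : (w : ℂ) * (v * conj v) = 1 := by
    rw [Complex.mul_conj]; exact_mod_cast hwv
  have hm0 : 0 < m := by omega
  have hwint : IsIntegral ℤ (w : ℂ) := .of_pow hm0 (hwmC ▸ isIntegral_root hα)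
  have hvint : IsIntegral ℤ v := .of_pow hm0 (hvm ▸ isIntegral_root hβ)
  have hvcint : IsIntegral ℤ (conj v) :=
    .of_pow hm0 (by rw [← map_pow, hvm]; exact isIntegral_root hγ)
  obtain ⟨a, ha⟩ : ∃ a : ℤ, (w : ℂ) + v + conj v = a := by
    obtain ⟨r, hr⟩ := exists_rat_trace hα hβ hγ hsum hprod p
    rw [← hp, ← hv, hvc] at hr
    exact exists_int_of_rat_of_isIntegral ((hwint.add hvint).add hvcint) hr
  -- `w⁻¹ = v * conj v`, and `q` is a polynomial with `q(α) = w⁻¹`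
  obtain ⟨b, hb⟩ : ∃ b : ℤ, v * conj v + w * conj v + w * v = b := by
    let q : ℚ[X] := p ^ (m - 1) * (X ^ 2 - X - 1)
    have hqx : ∀ x : ℂ, x ^ 3 = x ^ 2 + x + 1 → (aeval x p) ^ m = x →
        aeval x p * aeval x q = 1 := by
      intro x hx hxm
      simp only [q, map_sub, map_mul, map_pow, map_one, aeval_X]
      rw [← mul_assoc, mul_pow_sub_one (by omega), hxm, mul_sq_sub hx]
    have q1 := hqx α hα (hp ▸ hwmC)
    have q2 := hqx β hβ hvm
    have q3 := hqx (conj β) hγ (by rw [hvc, ← map_pow, hvm])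
    rw [← hp] at q1
    rw [← hv] at q2
    rw [hvc] at q3
    obtain ⟨r, hr⟩ := exists_rat_trace hα hβ hγ hsum hprod q
    have e1 : aeval α q = v * conj v := by
      linear_combination (v * conj v) * q1 - (aeval α q) * hwvC
    have e2 : aeval β q = w * conj v := by
      linear_combination (w * conj v) * q2 - (aeval β q) * hwvC
    have e3 : aeval (conj β) q = w * v := by
      linear_combination (w * v) * q3 - (aeval (conj β) q) * hwvC
    rw [e1, e2, e3] at hr
    exact exists_int_of_rat_of_isIntegral
      (((hvint.mul hvcint).add (hwint.mul hvcint)).add (hwint.mul hvint)) hr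
  have hw1 : 1 < w := by
    by_contra! h
    linarith [pow_le_one₀ hw0 h (n := m)]
  have hwne : w ≠ 0 := by linarith
  have haR : w + 2 * v.re = a := by
    have := congrArg Complex.re ha
    simp at this
    linarith
  have hbR : 1 / w + 2 * v.re * w = b := by
    have := congrArg Complex.re hb
    rw [Complex.mul_conj] at this
    simp at this
    have hn : 1 / w = Complex.normSq v := by rw [div_eq_iff hwne]; linarith
    rw [hn]
    linarith
  have ht : w * v.re ^ 2 ≤ 1 := by
    rw [← hwv, Complex.normSq_apply]
    nlinarith [mul_nonneg hw0 (mul_self_nonneg v.im)]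
  have hw2 : w ^ 2 < 1.84 := by
    have := pow_le_pow_right₀ hw1.le hm
    linarith
  have hpl := plastic_of_int hw1 hw2 ht haR hbR
  rcases hm.eq_or_lt with rfl | hm3
  · -- `w ^ 2 > 1.83` forces `w > 1.35`, above the plastic number
    have : 1.35 < w := by nlinarith
    nlinarith
  · have := pow_le_pow_right₀ hw1.le (show 3 ≤ m from hm3)
    linarith

theorem cube_root_not_perfect_power (α β z : ℂ)
    (hαim : α.im = 0) (hα : α ^ 3 = α ^ 2 + α + 1)
    (hα1 : 1.83 < α.re) (hα2 : α.re < 1.84)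
    (hβ : β ^ 3 = β ^ 2 + β + 1) (hβim : β.im ≠ 0)
    (hzmem : z ∈ IntermediateField.adjoin ℚ ({α, β} : Set ℂ))
    (hz : z ^ 3 = α / β)
    (m : ℕ) (hm : 2 ≤ m) :
    (¬ ∃ y ∈ IntermediateField.adjoin ℚ ({α, β} : Set ℂ), y ^ m = z) ∧
      (¬ ∃ y ∈ IntermediateField.adjoin ℚ ({α, β} : Set ℂ), y ^ m = -z) := by
  constructor
  · rintro ⟨y, hy, h⟩
    exact no_root hαim hα hα1 hα2 hβ hβim hy hm (.inl (by rw [h, hz]))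
  · rintro ⟨y, hy, h⟩
    exact no_root hαim hα hα1 hα2 hβ hβim hy hm (.inr (by rw [h, ← hz]; ring))
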